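/- arXiv:1803.02032 — 12 statements merged into one kernel-verified Lean document; each statement's English description precedes it below -/
import Mathlib

section
/- Let n ≥ 1 and let u₁, …, u_m be unit vectors in ℝⁿ and c₁, …, c_m positive real numbers satisfying ∑ᵢ cᵢ uᵢ = 0 and ∑ᵢ cᵢ uᵢ uᵢᵀ = Iₙ. If x ∈ ℝⁿ satisfies ⟨uᵢ, x⟩ ≤ 1 for every i = 1, …, m, then ‖x‖ ≤ n. -/
/-!
Write `r = ‖x‖` and `tᵢ = ⟪uᵢ, x⟫`. By hypothesis `tᵢ ≤ 1`, and `-r ≤ tᵢ` by Cauchy–Schwarz, so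
`0 ≤ ∑ cᵢ (1 - tᵢ) (r + tᵢ)`. John's conditions give `∑ cᵢ = n` (trace), `∑ cᵢ tᵢ = 0` and
`∑ cᵢ tᵢ² = r²`, so the sum expands to `n r - r²`, whence `r ≤ n`.
-/

open scoped RealInnerProductSpace

theorem johns_condition_polytope_norm_le_n
    (n m : ℕ) (hn : 1 ≤ n)
    (u : Fin m → EuclideanSpace ℝ (Fin n)) (c : Fin m → ℝ)
    (hu : ∀ i, ‖u i‖ = 1) (hc : ∀ i, 0 < c i)
    (h1 : ∑ i, c i • u i = 0)
    (h2 : ∑ i, c i • Matrix.vecMulVec (u i) (u i) = (1 : Matrix (Fin n) (Fin n) ℝ))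
    (x : EuclideanSpace ℝ (Fin n)) (hx : ∀ i, ⟪u i, x⟫ ≤ 1) :
    ‖x‖ ≤ n := by
  have hdot : ∀ y z : EuclideanSpace ℝ (Fin n), ⟪y, z⟫ = (y : Fin n → ℝ) ⬝ᵥ z := by
    intro y z
    simp [PiLp.inner_apply, dotProduct, mul_comm]
  have hsum : ∑ i, c i = n := by
    have h := congrArg Matrix.trace h2
    simp only [Matrix.trace_sum, Matrix.trace_smul, Matrix.trace_vecMulVec, ← hdot,
      real_inner_self_eq_norm_sq, hu, Matrix.trace_one, Fintype.card_fin] at h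
    simpa using h
  have hlin : ∑ i, c i * ⟪u i, x⟫ = 0 := by
    have h := congrArg (fun y => ⟪y, x⟫) h1
    simpa [sum_inner, real_inner_smul_left] using h
  have hquad : ∑ i, c i * ⟪u i, x⟫ ^ 2 = ‖x‖ ^ 2 := by
    have h := congrArg (fun M => (x : Fin n → ℝ) ⬝ᵥ (Matrix.mulVec M x)) h2
    simp only [Matrix.sum_mulVec, Matrix.smul_mulVec, Matrix.vecMulVec_mulVec, dotProduct_sum,
      dotProduct_smul, Matrix.one_mulVec] at h
    simp only [← hdot, real_inner_self_eq_norm_sq] at h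
    rw [← h]
    refine Finset.sum_congr rfl fun i _ => ?_
    simp [← hdot, real_inner_comm, sq]
  have hnonneg : 0 ≤ ∑ i, c i * ((1 - ⟪u i, x⟫) * (‖x‖ + ⟪u i, x⟫)) := by
    refine Finset.sum_nonneg fun i _ => mul_nonneg (hc i).le (mul_nonneg ?_ ?_)
    · linarith [hx i]
    · have h := abs_real_inner_le_norm (u i) x
      rw [hu i, one_mul] at h
      linarith [(abs_le.mp h).1]
  have hexp : ∑ i, c i * ((1 - ⟪u i, x⟫) * (‖x‖ + ⟪u i, x⟫))
      = ‖x‖ * ∑ i, c i + (1 - ‖x‖) * ∑ i, c i * ⟪u i, x⟫ - ∑ i, c i * ⟪u i, x⟫ ^ 2 := by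
    rw [Finset.mul_sum, Finset.mul_sum, ← Finset.sum_add_distrib, ← Finset.sum_sub_distrib]
    exact Finset.sum_congr rfl fun i _ => by ring
  rw [hexp, hsum, hlin, hquad] at hnonneg
  by_contra! h
  have hn0 : (0 : ℝ) ≤ n := Nat.cast_nonneg n
  nlinarith
end

section
/- Let n ≥ 1 and let K ⊆ ℝⁿ be a convex set containing the closed unit ball centered at the origin. Suppose there are unit vectors u₁, …, u_m in ℝⁿ and positive reals c₁, …, c_m with ∑ᵢ cᵢ uᵢ = 0 and ∑ᵢ cᵢ uᵢ uᵢᵀ = Iₙ, such that ⟨uᵢ, z⟩ ≤ 1 for every z ∈ K and every i. Then K is contained in the closed Euclidean ball of radius n centered at the origin. -/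
/-!
Write `r = ‖z‖` and `tᵢ = ⟪uᵢ, z⟫` for `z ∈ K`. The decomposition of the identity gives
`∑ cᵢ = n` (take traces, `sum_weights_eq`) and `∑ cᵢ tᵢ² = r²` (evaluate the quadratic form at `z`,
`sum_weights_mul_inner_sq`), while centering gives `∑ cᵢ tᵢ = 0`. The support condition and Cauchy-Schwarz give `-r ≤ tᵢ ≤ 1`, so
`0 ≤ ∑ cᵢ (1 - tᵢ) (tᵢ + r) = n r - r²`, which forces `r ≤ n`.
-/

open scoped RealInnerProductSpace

theorem sum_weights_eq {n m : ℕ} (u : Fin m → EuclideanSpace ℝ (Fin n)) (c : Fin m → ℝ)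
    (hu : ∀ i, ‖u i‖ = 1)
    (h2 : ∑ i, c i • Matrix.vecMulVec (u i) (u i) = (1 : Matrix (Fin n) (Fin n) ℝ)) :
    ∑ i, c i = n := by
  have h := congrArg Matrix.trace h2
  have hd : ∀ i, (u i).ofLp ⬝ᵥ (u i).ofLp = 1 := by
    intro i
    have := EuclideanSpace.real_norm_sq_eq (u i)
    rw [hu i] at this
    simp only [dotProduct, ← pow_two]
    linarith
  simpa [Matrix.trace_sum, Matrix.trace_smul, Matrix.trace_vecMulVec, hd] using h

theorem sum_weights_mul_inner_sq {n m : ℕ} (u : Fin m → EuclideanSpace ℝ (Fin n)) (c : Fin m → ℝ)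
    (h2 : ∑ i, c i • Matrix.vecMulVec (u i) (u i) = (1 : Matrix (Fin n) (Fin n) ℝ))
    (z : EuclideanSpace ℝ (Fin n)) :
    ∑ i, c i * ⟪u i, z⟫ ^ 2 = ‖z‖ ^ 2 := by
  have h := congrArg (fun A : Matrix (Fin n) (Fin n) ℝ => z.ofLp ⬝ᵥ A.mulVec z.ofLp) h2
  have hz : z.ofLp ⬝ᵥ z.ofLp = ‖z‖ ^ 2 := by
    rw [EuclideanSpace.real_norm_sq_eq]
    simp only [dotProduct, ← pow_two]
  have hi : ∀ i, ⟪u i, z⟫ = z.ofLp ⬝ᵥ (u i).ofLp := fun i => by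
    simp [EuclideanSpace.inner_eq_star_dotProduct]
  simp only [Matrix.sum_mulVec, dotProduct_sum, Matrix.smul_mulVec, dotProduct_smul,
    Matrix.vecMulVec_mulVec, Matrix.one_mulVec, hz] at h
  rw [← h]
  refine Finset.sum_congr rfl fun i _ => ?_
  rw [hi, dotProduct_comm (u i).ofLp z.ofLp]
  simp [pow_two]

theorem johns_theorem_containment_ball_radius_n
    (n m : ℕ) (hn : 1 ≤ n)
    (K : Set (EuclideanSpace ℝ (Fin n))) (hK : Convex ℝ K)
    (hball : Metric.closedBall (0 : EuclideanSpace ℝ (Fin n)) 1 ⊆ K)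
    (u : Fin m → EuclideanSpace ℝ (Fin n)) (c : Fin m → ℝ)
    (hu : ∀ i, ‖u i‖ = 1) (hc : ∀ i, 0 < c i)
    (h1 : ∑ i, c i • u i = 0)
    (h2 : ∑ i, c i • Matrix.vecMulVec (u i) (u i) = (1 : Matrix (Fin n) (Fin n) ℝ))
    (hsupp : ∀ z ∈ K, ∀ i, ⟪u i, z⟫ ≤ 1) :
    K ⊆ Metric.closedBall (0 : EuclideanSpace ℝ (Fin n)) n := by
  intro z hz
  rw [mem_closedBall_zero_iff]
  have hw := sum_weights_eq u c hu h2
  have hq := sum_weights_mul_inner_sq u c h2 z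
  have hl : ∑ i, c i * ⟪u i, z⟫ = 0 := by
    have h := congrArg (fun x => ⟪x, z⟫) h1
    simpa [sum_inner, real_inner_smul_left] using h
  have hnn : 0 ≤ ∑ i, c i * ((1 - ⟪u i, z⟫) * (⟪u i, z⟫ + ‖z‖)) := by
    refine Finset.sum_nonneg fun i _ => mul_nonneg (hc i).le (mul_nonneg ?_ ?_)
    · linarith [hsupp z hz i]
    · have h := neg_le_of_abs_le (abs_real_inner_le_norm (u i) z)
      rw [hu i, one_mul] at h
      linarith
  have he : ∑ i, c i * ((1 - ⟪u i, z⟫) * (⟪u i, z⟫ + ‖z‖)) = n * ‖z‖ - ‖z‖ ^ 2 := by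
    calc _ = (∑ i, c i) * ‖z‖ + (1 - ‖z‖) * (∑ i, c i * ⟪u i, z⟫)
          - ∑ i, c i * ⟪u i, z⟫ ^ 2 := by
          rw [Finset.sum_mul, Finset.mul_sum, ← Finset.sum_add_distrib,
            ← Finset.sum_sub_distrib]
          exact Finset.sum_congr rfl fun i _ => by ring
      _ = _ := by rw [hw, hl, hq]; ring
  rw [he] at hnn
  by_contra! hlt
  have hn0 : (0 : ℝ) ≤ n := n.cast_nonneg
  nlinarith
end

section
/- Let n ≥ 1 and let K ⊆ ℝⁿ be a convex set containing the closed unit ball centered at the origin and symmetric about the origin (z ∈ K implies −z ∈ K). Suppose there are unit vectors u₁, …, u_m in ℝⁿ and positive reals c₁, …, c_m with ∑ᵢ cᵢ uᵢ uᵢᵀ = Iₙ, such that ⟨uᵢ, z⟩ ≤ 1 for every z ∈ K and every i. Then K is contained in the closed Euclidean ball of radius √n centered at the origin. -/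
/-!
Pairing the decomposition `∑ i, c i • uᵢuᵢᵀ = 1` with `z` on both sides gives
`‖z‖² = ∑ i, c i * ⟪uᵢ, z⟫²`, and taking its trace gives `∑ i, c i = n` because the `uᵢ` are unit
vectors. For `z ∈ K`, applying the support inequalities to `z` and `-z` yields `|⟪uᵢ, z⟫| ≤ 1`,
so `‖z‖² ≤ ∑ i, c i = n`.
-/

open scoped RealInnerProductSpace

/-- A decomposition of the identity into weighted rank-one matrices `uᵢuᵢᵀ` is a Parseval
identity. -/
lemma norm_sq_eq_sum_of_decomposition {n m : ℕ}
    (u : Fin m → EuclideanSpace ℝ (Fin n)) (c : Fin m → ℝ)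
    (h : ∑ i, c i • Matrix.vecMulVec (u i) (u i) = (1 : Matrix (Fin n) (Fin n) ℝ))
    (z : EuclideanSpace ℝ (Fin n)) :
    ‖z‖ ^ 2 = ∑ i, c i * ⟪u i, z⟫ ^ 2 := by
  have key := congrArg (fun M : Matrix (Fin n) (Fin n) ℝ => z.ofLp ⬝ᵥ M.mulVec z.ofLp) h
  simp only [Matrix.sum_mulVec, Matrix.smul_mulVec, Matrix.vecMulVec_mulVec, dotProduct_sum,
    dotProduct_smul, Matrix.one_mulVec, smul_eq_mul,
    op_smul_eq_smul] at key
  rw [← real_inner_self_eq_norm_sq, EuclideanSpace.inner_eq_star_dotProduct, star_trivial, ← key]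
  refine Finset.sum_congr rfl fun i _ => ?_
  rw [EuclideanSpace.inner_eq_star_dotProduct, star_trivial, dotProduct_comm (u i).ofLp z.ofLp]
  ring

lemma sum_weights_eq_of_decomposition {n m : ℕ}
    (u : Fin m → EuclideanSpace ℝ (Fin n)) (c : Fin m → ℝ) (hu : ∀ i, ‖u i‖ = 1)
    (h : ∑ i, c i • Matrix.vecMulVec (u i) (u i) = (1 : Matrix (Fin n) (Fin n) ℝ)) :
    ∑ i, c i = n := by
  have key := congrArg Matrix.trace h
  have hd : ∀ i, (u i).ofLp ⬝ᵥ (u i).ofLp = 1 := fun i => by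
    have := real_inner_self_eq_norm_sq (u i)
    rwa [EuclideanSpace.inner_eq_star_dotProduct, star_trivial, hu, one_pow] at this
  simpa [Matrix.trace_sum, Matrix.trace_smul, Matrix.trace_vecMulVec, hd] using key

theorem johns_theorem_symmetric_containment_ball_radius_sqrt_n
    (n m : ℕ) (hn : 1 ≤ n)
    (K : Set (EuclideanSpace ℝ (Fin n))) (hK : Convex ℝ K)
    (hball : Metric.closedBall (0 : EuclideanSpace ℝ (Fin n)) 1 ⊆ K)
    (hsymm : ∀ z ∈ K, -z ∈ K)
    (u : Fin m → EuclideanSpace ℝ (Fin n)) (c : Fin m → ℝ)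
    (hu : ∀ i, ‖u i‖ = 1) (hc : ∀ i, 0 < c i)
    (h2 : ∑ i, c i • Matrix.vecMulVec (u i) (u i) = (1 : Matrix (Fin n) (Fin n) ℝ))
    (hsupp : ∀ z ∈ K, ∀ i, ⟪u i, z⟫ ≤ 1) :
    K ⊆ Metric.closedBall (0 : EuclideanSpace ℝ (Fin n)) (Real.sqrt n) := by
  intro z hz
  rw [mem_closedBall_zero_iff]
  apply Real.le_sqrt_of_sq_le
  rw [norm_sq_eq_sum_of_decomposition u c h2 z, ← sum_weights_eq_of_decomposition u c hu h2]
  refine Finset.sum_le_sum fun i _ => mul_le_of_le_one_right (hc i).le ?_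
  have h₁ := hsupp z hz i
  have h₂ := hsupp (-z) (hsymm z hz) i
  rw [inner_neg_right] at h₂
  exact (sq_le_one_iff_abs_le_one _).2 (abs_le.2 ⟨by linarith, h₁⟩)
end

section
/- Let n ≥ 1 and let u₁, …, u_m be unit vectors in ℝⁿ and c₁, …, c_m positive real numbers satisfying ∑ᵢ cᵢ uᵢ uᵢᵀ = Iₙ. Then ‖∑ᵢ cᵢ uᵢ‖ ≤ √n. -/
/-!
Put `v = ∑ i, c i • u i`. Taking the trace of the decomposition of the identity gives
`∑ i, c i = n`, and evaluating it as a quadratic form at `v` gives `∑ i, c i * ⟪u i, v⟫ ^ 2 = ‖v‖ ^ 2`.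
Since also `∑ i, c i * ⟪u i, v⟫ = ‖v‖ ^ 2`, expanding the nonnegative sum
`∑ i, c i * (1 - ⟪u i, v⟫) ^ 2` yields `0 ≤ n - 2 * ‖v‖ ^ 2 + ‖v‖ ^ 2 = n - ‖v‖ ^ 2`.
-/

/-- The trace of John's decomposition of the identity: the weights sum to the dimension. -/
theorem john_sum_weights (n m : ℕ)
    (u : Fin m → EuclideanSpace ℝ (Fin n)) (c : Fin m → ℝ)
    (hu : ∀ i, ‖u i‖ = 1)
    (h2 : ∑ i, c i • Matrix.vecMulVec (u i) (u i) = (1 : Matrix (Fin n) (Fin n) ℝ)) :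
    ∑ i, c i = n := by
  have h := congrArg Matrix.trace h2
  rw [Matrix.trace_sum, Matrix.trace_one, Fintype.card_fin] at h
  rw [← h]
  refine Finset.sum_congr rfl fun i _ => ?_
  have h1 : u i ⬝ᵥ u i = 1 := by
    have := EuclideanSpace.real_norm_sq_eq (u i)
    rw [hu i] at this
    simpa [dotProduct, pow_two] using this.symm
  rw [Matrix.trace_smul, Matrix.trace_vecMulVec, h1, smul_eq_mul, mul_one]

/-- The quadratic form of John's decomposition of the identity, evaluated at `v`. -/
theorem john_sum_inner_sq (n m : ℕ)
    (u : Fin m → EuclideanSpace ℝ (Fin n)) (c : Fin m → ℝ)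
    (h2 : ∑ i, c i • Matrix.vecMulVec (u i) (u i) = (1 : Matrix (Fin n) (Fin n) ℝ))
    (v : EuclideanSpace ℝ (Fin n)) :
    ∑ i, c i * (inner ℝ (u i) v) ^ 2 = ‖v‖ ^ 2 := by
  have h := congrArg (fun A : Matrix (Fin n) (Fin n) ℝ => v ⬝ᵥ (A.mulVec v)) h2
  have hv : ‖v‖ ^ 2 = v ⬝ᵥ v := by
    rw [EuclideanSpace.real_norm_sq_eq]
    simp only [dotProduct, pow_two]
  simp only [Matrix.one_mulVec, Matrix.sum_mulVec, dotProduct_sum] at h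
  rw [hv, ← h]
  refine Finset.sum_congr rfl fun i _ => ?_
  have hi : inner ℝ (u i) v = v ⬝ᵥ u i := by
    simp [EuclideanSpace.inner_eq_star_dotProduct]
  rw [Matrix.smul_mulVec, dotProduct_smul, Matrix.vecMulVec_mulVec, hi, dotProduct_comm (u i) v]
  simp [pow_two]

theorem johns_condition_sum_norm_le_sqrt_n
    (n m : ℕ) (hn : 1 ≤ n)
    (u : Fin m → EuclideanSpace ℝ (Fin n)) (c : Fin m → ℝ)
    (hu : ∀ i, ‖u i‖ = 1) (hc : ∀ i, 0 < c i)
    (h2 : ∑ i, c i • Matrix.vecMulVec (u i) (u i) = (1 : Matrix (Fin n) (Fin n) ℝ)) :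
    ‖∑ i, c i • u i‖ ≤ Real.sqrt n := by
  set v := ∑ i, c i • u i with hv
  have hlin : ∑ i, c i * inner ℝ (u i) v = ‖v‖ ^ 2 := by
    rw [← real_inner_self_eq_norm_sq]
    conv_rhs => rw [hv, sum_inner]
    simp only [real_inner_smul_left, ← hv]
  have hpos : 0 ≤ ∑ i, c i * (1 - inner ℝ (u i) v) ^ 2 :=
    Finset.sum_nonneg fun i _ => mul_nonneg (hc i).le (sq_nonneg _)
  have hexp : ∑ i, c i * (1 - inner ℝ (u i) v) ^ 2
      = ∑ i, c i - 2 * ∑ i, c i * inner ℝ (u i) v + ∑ i, c i * (inner ℝ (u i) v) ^ 2 := by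
    rw [Finset.mul_sum, ← Finset.sum_sub_distrib, ← Finset.sum_add_distrib]
    exact Finset.sum_congr rfl fun i _ => by ring
  rw [hexp, john_sum_weights n m u c hu h2, hlin, john_sum_inner_sq n m u c h2 v] at hpos
  exact Real.le_sqrt_of_sq_le (by linarith)
end

section
/- Let n ≥ 1, let u₁, …, u_m be unit vectors in ℝⁿ and c₁, …, c_m positive real numbers satisfying ∑ᵢ cᵢ uᵢ uᵢᵀ = Iₙ, and let y ∈ ℝⁿ. If E is a real n×n matrix such that ‖E uᵢ‖ ≤ 1 − ⟨uᵢ, y⟩ for every i = 1, …, m, then tr(EᵀE) ≤ n − 2⟨∑ᵢ cᵢuᵢ, y⟩ + ‖y‖². -/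
open scoped RealInnerProductSpace
open Matrix

/-!
Pairing John's decomposition `∑ cᵢ uᵢuᵢᵀ = 1` with a matrix `M` under the trace gives
`tr M = ∑ cᵢ ⟨uᵢ, M uᵢ⟩` (`trace_eq_sum_of_john`). Taking `M = EᵀE`, `M = 1` and `M = yyᵀ` yields
`tr(EᵀE) = ∑ cᵢ ‖E uᵢ‖²`, `n = ∑ cᵢ` and `‖y‖² = ∑ cᵢ ⟨uᵢ, y⟩²`. Squaring the feasibility
constraints, whose left sides are nonnegative, and summing them with weights `cᵢ` bounds the trace
by `∑ cᵢ (1 - ⟨uᵢ, y⟩)²`, which expands to the right-hand side.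
-/

theorem trace_eq_sum_of_john {n m : ℕ}
    {u : Fin m → EuclideanSpace ℝ (Fin n)} {c : Fin m → ℝ}
    (h2 : ∑ i, c i • Matrix.vecMulVec (u i) (u i) = (1 : Matrix (Fin n) (Fin n) ℝ))
    (M : Matrix (Fin n) (Fin n) ℝ) :
    M.trace = ∑ i, c i * ((u i).ofLp ⬝ᵥ M *ᵥ (u i).ofLp) := by
  calc M.trace = (M * ∑ i, c i • Matrix.vecMulVec (u i) (u i)).trace := by rw [h2, mul_one]
    _ = _ := by
      simp [Matrix.mul_sum, Matrix.trace_sum, Matrix.mul_vecMulVec, Matrix.trace_vecMulVec,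
        dotProduct_comm]

theorem feasible_ellipsoid_trace_bound
    (n m : ℕ) (hn : 1 ≤ n)
    (u : Fin m → EuclideanSpace ℝ (Fin n)) (c : Fin m → ℝ)
    (hu : ∀ i, ‖u i‖ = 1) (hc : ∀ i, 0 < c i)
    (h2 : ∑ i, c i • Matrix.vecMulVec (u i) (u i) = (1 : Matrix (Fin n) (Fin n) ℝ))
    (y : EuclideanSpace ℝ (Fin n)) (E : Matrix (Fin n) (Fin n) ℝ)
    (hE : ∀ i, ‖Matrix.toEuclideanLin E (u i)‖ ≤ 1 - ⟪u i, y⟫) :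
    (Eᵀ * E).trace ≤ (n : ℝ) - 2 * ⟪∑ i, c i • u i, y⟫ + ‖y‖ ^ 2 := by
  have hdot : ∀ v w : EuclideanSpace ℝ (Fin n), v.ofLp ⬝ᵥ w.ofLp = ⟪v, w⟫ := fun v w => by
    rw [EuclideanSpace.inner_eq_star_dotProduct, star_trivial, dotProduct_comm]
  have htrace : (Eᵀ * E).trace = ∑ i, c i * ‖Matrix.toEuclideanLin E (u i)‖ ^ 2 := by
    rw [trace_eq_sum_of_john h2]
    refine Finset.sum_congr rfl fun i _ => ?_
    rw [← real_inner_self_eq_norm_sq, ← hdot, ← Matrix.mulVec_mulVec, Matrix.dotProduct_mulVec,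
      Matrix.vecMul_transpose]
    rfl
  have hn' : (n : ℝ) = ∑ i, c i := by
    have h := trace_eq_sum_of_john h2 1
    simpa [hdot, hu] using h
  have hy : ‖y‖ ^ 2 = ∑ i, c i * ⟪u i, y⟫ ^ 2 := by
    have h := trace_eq_sum_of_john h2 (Matrix.vecMulVec y y)
    rw [Matrix.trace_vecMulVec, hdot, real_inner_self_eq_norm_sq] at h
    rw [h]
    refine Finset.sum_congr rfl fun i _ => ?_
    rw [Matrix.vecMulVec_mulVec, dotProduct_comm y.ofLp, hdot]
    simp [hdot, sq, real_inner_smul_right]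
  calc (Eᵀ * E).trace = ∑ i, c i * ‖Matrix.toEuclideanLin E (u i)‖ ^ 2 := htrace
    _ ≤ ∑ i, c i * (1 - ⟪u i, y⟫) ^ 2 := Finset.sum_le_sum fun i _ =>
      mul_le_mul_of_nonneg_left (pow_le_pow_left₀ (norm_nonneg _) (hE i) 2) (hc i).le
    _ = (n : ℝ) - 2 * ⟪∑ i, c i • u i, y⟫ + ‖y‖ ^ 2 := by
      rw [hn', hy, sum_inner, Finset.mul_sum, ← Finset.sum_sub_distrib, ← Finset.sum_add_distrib]
      refine Finset.sum_congr rfl fun i _ => ?_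
      rw [real_inner_smul_left]
      ring
end

section
/- Let n ≥ 2, let u₁, …, u_m be unit vectors in ℝⁿ and c₁, …, c_m positive real numbers satisfying ∑ᵢ cᵢ uᵢ uᵢᵀ = Iₙ, and let y ∈ ℝⁿ with ‖y‖ ≤ n^{−5/2}. If E is a symmetric positive semidefinite n×n real matrix such that ‖E uᵢ‖ ≤ 1 − ⟨uᵢ, y⟩ for every i = 1, …, m, then det E ≤ 1 + 3 n^{−2}. -/
open scoped RealInnerProductSpace
open Matrix

/-!
Pairing John's identity `∑ cᵢ uᵢuᵢᵀ = I` with `E`, with `I` and with `yyᵀ` gives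
`∑ cᵢ ⟨uᵢ, E uᵢ⟩ = tr E`, `∑ cᵢ = n` and `∑ cᵢ ⟨uᵢ, y⟩² = ‖y‖²`. Feasibility and Cauchy–Schwarz give
`⟨uᵢ, E uᵢ⟩ ≤ 1 - ⟨uᵢ, y⟩`, so `tr E ≤ n - ∑ cᵢ ⟨uᵢ, y⟩ ≤ n + √n ‖y‖ ≤ n + n⁻²`.
Since each eigenvalue satisfies `0 ≤ λ ≤ exp (λ - 1)`, `det E ≤ exp (tr E - n) ≤ exp (n⁻²)`, which
is at most `1 + 3 n⁻²` because `n⁻² ≤ 1/4`.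
-/

lemma det_le_exp_trace_sub {n : ℕ} {E : Matrix (Fin n) (Fin n) ℝ} (hE : E.PosSemidef) :
    E.det ≤ Real.exp (E.trace - n) := by
  have hd := hE.isHermitian.det_eq_prod_eigenvalues
  have ht := hE.isHermitian.trace_eq_sum_eigenvalues
  simp only [RCLike.ofReal_real_eq_id, id_eq] at hd ht
  have h : E.trace - n = ∑ i, (hE.isHermitian.eigenvalues i - 1) := by
    simp [ht, Finset.sum_sub_distrib]
  rw [hd, h, Real.exp_sum]
  refine Finset.prod_le_prod (fun i _ => hE.eigenvalues_nonneg i) fun i _ => ?_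
  linarith [Real.add_one_le_exp (hE.isHermitian.eigenvalues i - 1)]

/-- The resolution of the identity, paired with an arbitrary matrix `A` under the trace form. -/
lemma trace_eq_sum_of_john_s9 {n m : ℕ} {v : Fin m → Fin n → ℝ} {c : Fin m → ℝ}
    (h : ∑ i, c i • vecMulVec (v i) (v i) = (1 : Matrix (Fin n) (Fin n) ℝ))
    (A : Matrix (Fin n) (Fin n) ℝ) :
    A.trace = ∑ i, c i * (v i ⬝ᵥ A *ᵥ v i) := by
  conv_lhs => rw [← Matrix.mul_one A, ← h]
  simp only [Matrix.mul_sum, Matrix.mul_smul, trace_sum, trace_smul, mul_vecMulVec,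
    trace_vecMulVec, smul_eq_mul, dotProduct_comm]

theorem det_upper_bound_after_step
    (n m : ℕ) (hn : 2 ≤ n)
    (u : Fin m → EuclideanSpace ℝ (Fin n)) (c : Fin m → ℝ)
    (hu : ∀ i, ‖u i‖ = 1) (hc : ∀ i, 0 < c i)
    (h2 : ∑ i, c i • Matrix.vecMulVec (u i) (u i) = (1 : Matrix (Fin n) (Fin n) ℝ))
    (y : EuclideanSpace ℝ (Fin n)) (hy : ‖y‖ ≤ (n : ℝ) ^ (-(5 : ℝ) / 2))
    (E : Matrix (Fin n) (Fin n) ℝ) (hEpsd : E.PosSemidef)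
    (hE : ∀ i, ‖Matrix.toEuclideanLin E (u i)‖ ≤ 1 - ⟪u i, y⟫) :
    E.det ≤ 1 + 3 / (n : ℝ) ^ 2 := by
  have hn2 : (2 : ℝ) ≤ n := by exact_mod_cast hn
  have hn0 : (0 : ℝ) < n := by linarith
  have hsum : ∑ i, c i = n := by
    have h := trace_eq_sum_of_john_s9 h2 1
    have h1 : ∀ i, (u i).ofLp ⬝ᵥ (u i).ofLp = 1 := fun i => by
      have := EuclideanSpace.real_norm_sq_eq (u i)
      rw [hu i] at this
      simp only [dotProduct, ← pow_two]
      linarith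
    simpa [h1] using h.symm
  have hsq : ∑ i, c i * ⟪u i, y⟫ ^ 2 = ‖y‖ ^ 2 := by
    have h := trace_eq_sum_of_john_s9 h2 (vecMulVec y y)
    have hyy : (vecMulVec y.ofLp y.ofLp).trace = ‖y‖ ^ 2 := by
      rw [EuclideanSpace.real_norm_sq_eq, trace_vecMulVec]
      simp [dotProduct, pow_two]
    rw [← hyy, h]
    refine Finset.sum_congr rfl fun i _ => ?_
    have hi : ⟪u i, y⟫ = y.ofLp ⬝ᵥ (u i).ofLp := by
      simp [EuclideanSpace.inner_eq_star_dotProduct]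
    rw [hi, vecMulVec_mulVec]
    simp [dotProduct_comm, pow_two]
  have hquad : ∀ i, (u i).ofLp ⬝ᵥ E *ᵥ (u i).ofLp ≤ 1 - ⟪u i, y⟫ := fun i => by
    have h := real_inner_le_norm (u i) (Matrix.toEuclideanLin E (u i))
    have hi : ⟪u i, Matrix.toEuclideanLin E (u i)⟫ = (u i).ofLp ⬝ᵥ E *ᵥ (u i).ofLp := by
      simp [EuclideanSpace.inner_eq_star_dotProduct, dotProduct_comm]
    rw [hu i, one_mul, hi] at h
    exact h.trans (hE i)
  have hy2 : ‖y‖ ^ 2 ≤ 1 / (n : ℝ) ^ 5 := by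
    have h : ((n : ℝ) ^ (-(5 : ℝ) / 2)) ^ 2 = 1 / (n : ℝ) ^ 5 := by
      rw [← Real.rpow_natCast, ← Real.rpow_mul hn0.le]
      norm_num
    rw [← h]
    gcongr
  have htr : E.trace - n ≤ 1 / (n : ℝ) ^ 2 := by
    -- Cauchy–Schwarz for `∑ cᵢ ⟨uᵢ, y⟩` in the form `-s ≤ (n⁻³ + n³ s²) / 2`,
    -- with the weight `n³` balancing `∑ cᵢ = n` against `‖y‖² ≤ n⁻⁵`.
    have key : ∀ s : ℝ, -s ≤ (1 / (n : ℝ) ^ 3 + (n : ℝ) ^ 3 * s ^ 2) / 2 := fun s => by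
      have h : 1 / (n : ℝ) ^ 3 + (n : ℝ) ^ 3 * s ^ 2 + 2 * s
          = (1 + (n : ℝ) ^ 3 * s) ^ 2 / (n : ℝ) ^ 3 := by
        field_simp
        ring
      have : 0 ≤ (1 + (n : ℝ) ^ 3 * s) ^ 2 / (n : ℝ) ^ 3 := by positivity
      linarith
    calc E.trace - n ≤ ∑ i, c i * (1 + (1 / (n : ℝ) ^ 3 + (n : ℝ) ^ 3 * ⟪u i, y⟫ ^ 2) / 2) - n := by
          rw [trace_eq_sum_of_john_s9 h2 E]
          gcongr with i
          · exact (hc i).le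
          · linarith [hquad i, key ⟪u i, y⟫]
      _ = (∑ i, c i) * (1 + 1 / (n : ℝ) ^ 3 / 2)
            + (n : ℝ) ^ 3 / 2 * (∑ i, c i * ⟪u i, y⟫ ^ 2) - n := by
          rw [Finset.sum_mul, Finset.mul_sum, ← Finset.sum_add_distrib]
          congr 1
          exact Finset.sum_congr rfl fun i _ => by ring
      _ ≤ n * (1 + 1 / (n : ℝ) ^ 3 / 2) + (n : ℝ) ^ 3 / 2 * (1 / (n : ℝ) ^ 5) - n := by
          rw [hsum, hsq]
          gcongr
      _ = 1 / (n : ℝ) ^ 2 := by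
          field_simp
          ring
  set x : ℝ := 1 / (n : ℝ) ^ 2 with hx
  have hx0 : 0 ≤ x := by positivity
  have hx4 : x ≤ 1 / 4 := by
    rw [hx]
    apply one_div_le_one_div_of_le <;> nlinarith
  have hexp : Real.exp x ≤ 1 + 3 * x := by
    have h1 := Real.add_one_le_exp (-x)
    have h2 : Real.exp x * Real.exp (-x) = 1 := by rw [← Real.exp_add]; simp
    -- `exp x ≤ 1 / (1 - x)`, and `(1 + 3x)(1 - x) ≥ 1` for `0 ≤ x ≤ 2/3`.
    have h3 : Real.exp x * (1 - x) ≤ 1 := by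
      rw [← h2]
      gcongr
      linarith
    have h4 : 1 ≤ (1 + 3 * x) * (1 - x) := by nlinarith
    exact le_of_mul_le_mul_right (h3.trans h4) (by linarith)
  calc E.det ≤ Real.exp (E.trace - n) := det_le_exp_trace_sub hEpsd
    _ ≤ Real.exp x := Real.exp_le_exp.mpr htr
    _ ≤ 1 + 3 * x := hexp
    _ = 1 + 3 / (n : ℝ) ^ 2 := by rw [hx]; ring
end

section
/- Let n ≥ 1 and let y ∈ ℝⁿ with 0 < ‖y‖ ≤ 1/(4√n). Set β = 1 − ‖y‖/√n, α = 2√n/‖y‖, and E = β(Iₙ − α y yᵀ). Then E is symmetric positive definite, and for every unit vector u ∈ ℝⁿ one has ‖E u‖ ≤ 1 − ⟨u, y⟩. -/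
open scoped RealInnerProductSpace
open Matrix

/-!
Everything reduces to the scalars `r = ‖y‖`, `s = √n ≥ 1` and `t = ⟪u, y⟫`. The operator
`1 - α y yᵀ` acts as the identity on the orthogonal complement of `y` and has the eigenvalue
`1 - α r ^ 2 = 1 - 2 s r ≥ 1 / 2` at `y`, so Cauchy–Schwarz gives positive definiteness. For a unit
vector `u`, expanding the square gives `‖E u‖ ^ 2 = β ^ 2 (1 - 2 α t ^ 2 + α ^ 2 t ^ 2 r ^ 2)`, and
comparing this with `(1 - t) ^ 2` is the assertion that a quadratic polynomial in `t` is nonnegative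
(`scalar_bound`). Since `t ≤ r ≤ 1 / 4`, the quantity `1 - t` is nonnegative and square roots can be
taken.
-/

/-- The squared form of the slab inequality. Here `β = 1 - r / s` and `α = 2 s / r`. -/
lemma scalar_bound {r s : ℝ} (hs : 1 ≤ s) (hr : 0 < r) (h : s * r ≤ 1 / 4) (t : ℝ) :
    (1 - r / s) ^ 2 * (1 - 2 * (2 * s / r) * t ^ 2 + (2 * s / r) ^ 2 * t ^ 2 * r ^ 2)
      ≤ (1 - t) ^ 2 := by
  have hs0 : 0 < s := by linarith
  -- In the variables `q = r / s`, `w = t / q` the gap between the two sides is a multiple of `q`.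
  obtain ⟨q, hq⟩ : ∃ q, q = r / s := ⟨_, rfl⟩
  have hq0 : 0 < q := hq ▸ div_pos hr hs0
  have hrq : r = q * s := by rw [hq]; field_simp
  have hq1 : q ≤ 1 / 4 := by nlinarith [mul_pos hq0 hs0]
  obtain ⟨w, rfl⟩ : ∃ w, t = q * w := ⟨t / q, by field_simp⟩
  have key : 1 - 2 * (2 * s / r) * (q * w) ^ 2 + (2 * s / r) ^ 2 * (q * w) ^ 2 * r ^ 2
      = 1 - 4 * (1 - s * r) * (q * w ^ 2) := by
    rw [hrq]; field_simp; ring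
  rw [key, ← hq]
  have h1 : 9 / 16 ≤ (1 - q) ^ 2 := by nlinarith
  have h2 : 1 ≤ 4 * (1 - q) ^ 2 * (1 - s * r) := by nlinarith
  have h3 : q * w ^ 2 ≤ 4 * (1 - q) ^ 2 * (1 - s * r) * (q * w ^ 2) :=
    le_mul_of_one_le_left (by positivity) h2
  have h4 : 0 ≤ q * ((w - 1) ^ 2 + (1 - q)) :=
    mul_nonneg hq0.le (by nlinarith [sq_nonneg (w - 1)])
  nlinarith [sq_nonneg (q * w)]

lemma rank_one_mulVec {n : ℕ} (a : ℝ) (x y : EuclideanSpace ℝ (Fin n)) :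
    ((1 : Matrix (Fin n) (Fin n) ℝ) - a • vecMulVec y y) *ᵥ x
      = (x - (a * ⟪x, y⟫) • y : EuclideanSpace ℝ (Fin n)) := by
  ext i
  have : (y : Fin n → ℝ) ⬝ᵥ x = ⟪x, y⟫ := by
    simp [EuclideanSpace.inner_eq_star_dotProduct]
  simp [sub_mulVec, smul_mulVec, vecMulVec_mulVec, this]
  ring

theorem explicit_feasible_ellipsoid
    (n : ℕ) (hn : 1 ≤ n) (y : EuclideanSpace ℝ (Fin n))
    (hy0 : 0 < ‖y‖) (hy : ‖y‖ ≤ 1 / (4 * Real.sqrt n)) :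
    ((1 - ‖y‖ / Real.sqrt n) •
        ((1 : Matrix (Fin n) (Fin n) ℝ)
          - (2 * Real.sqrt n / ‖y‖) • Matrix.vecMulVec y y)).PosDef ∧
    ∀ u : EuclideanSpace ℝ (Fin n), ‖u‖ = 1 →
      ‖Matrix.toEuclideanLin
          ((1 - ‖y‖ / Real.sqrt n) •
            ((1 : Matrix (Fin n) (Fin n) ℝ)
              - (2 * Real.sqrt n / ‖y‖) • Matrix.vecMulVec y y)) u‖
        ≤ 1 - ⟪u, y⟫ := by
  have hs : 1 ≤ Real.sqrt n := Real.one_le_sqrt.2 (by exact_mod_cast hn)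
  set s := Real.sqrt n
  have hs0 : 0 < s := by linarith
  have hsr : s * ‖y‖ ≤ 1 / 4 := by
    rw [le_div_iff₀ (by positivity)] at hy
    linarith
  have hr : ‖y‖ ≤ 1 / 4 := by nlinarith
  have hβ : 0 < 1 - ‖y‖ / s := by
    have : ‖y‖ / s < 1 := by rw [div_lt_one hs0]; linarith
    linarith
  set α := 2 * s / ‖y‖ with hα
  have hα0 : 0 < α := by positivity
  have hαr : α * ‖y‖ ^ 2 ≤ 1 / 2 := by
    have : α * ‖y‖ ^ 2 = 2 * (s * ‖y‖) := by rw [hα]; field_simp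
    linarith
  constructor
  · refine PosDef.smul (.of_dotProduct_mulVec_pos ?_ fun x hx => ?_) hβ
    · ext i j
      simp [vecMulVec_apply, one_apply, mul_comm, eq_comm]
    · obtain ⟨x, rfl⟩ : ∃ z : EuclideanSpace ℝ (Fin n), x = z := ⟨WithLp.toLp 2 x, rfl⟩
      have hx0 : 0 < ‖x‖ := norm_pos_iff.2 fun h => hx (by simp [h])
      have hform : star (x : Fin n → ℝ) ⬝ᵥ ((1 - α • vecMulVec y y) *ᵥ x)
          = ‖x‖ ^ 2 - α * ⟪x, y⟫ ^ 2 := by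
        rw [rank_one_mulVec, dotProduct_comm, ← EuclideanSpace.inner_eq_star_dotProduct,
          inner_sub_right, inner_smul_right, real_inner_self_eq_norm_sq]
        ring
      rw [hform]
      have hcs : ⟪x, y⟫ ^ 2 ≤ ‖x‖ ^ 2 * ‖y‖ ^ 2 := by
        rw [← mul_pow]
        exact sq_le_sq' (neg_le_of_abs_le (abs_real_inner_le_norm x y)) (real_inner_le_norm x y)
      nlinarith [mul_le_mul_of_nonneg_left hcs hα0.le,
        mul_le_mul_of_nonneg_left hαr (sq_nonneg ‖x‖), pow_pos hx0 2]
  · intro u hu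
    have hE : toEuclideanLin ((1 - ‖y‖ / s) • (1 - α • vecMulVec y y)) u
        = (1 - ‖y‖ / s) • (u - (α * ⟪u, y⟫) • y) := by
      ext1
      simp only [map_smul, LinearMap.smul_apply, WithLp.ofLp_smul]
      rw [← rank_one_mulVec]
      rfl
    have ht : ⟪u, y⟫ ≤ ‖y‖ := by simpa [hu] using real_inner_le_norm u y
    refine (sq_le_sq₀ (norm_nonneg _) (by linarith)).1 ?_
    rw [hE, norm_smul, mul_pow, Real.norm_eq_abs, sq_abs, norm_sub_sq_real, inner_smul_right,
      norm_smul, mul_pow, Real.norm_eq_abs, sq_abs, hu]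
    refine le_of_eq_of_le ?_ (scalar_bound hs hy0 hsr ⟪u, y⟫)
    ring
end

section
/- Let n ≥ 1 and let δ be a real number with 0 ≤ δ ≤ n^{−5/2}. Then (1 − δ/√n)^n · (1 − 2√n·δ) ≥ 1 − 3 n^{−2}. -/
/-!
With `t = √n * δ`, Bernoulli's inequality gives `(1 - δ/√n)^n ≥ 1 - t`, and the hypothesis on `δ`
says `t ≤ 1/n²`. If `1 - 2t ≥ 0`, the product is at least `(1 - t)(1 - 2t) ≥ 1 - 3t`. Otherwise the
power, lying in `[0, 1]`, multiplies a negative number, so the product is at least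
`1 - 2t ≥ 1 - 3t`.
-/

theorem det_lower_bound_computation
    (n : ℕ) (hn : 1 ≤ n) (δ : ℝ) (hδ0 : 0 ≤ δ) (hδ : δ ≤ (n : ℝ) ^ (-(5 : ℝ) / 2)) :
    1 - 3 / (n : ℝ) ^ 2 ≤ (1 - δ / Real.sqrt n) ^ n * (1 - 2 * Real.sqrt n * δ) := by
  have hn1 : (1 : ℝ) ≤ n := by exact_mod_cast hn
  have hn0 : (0 : ℝ) < n := by linarith
  have hs1 : 1 ≤ Real.sqrt n := Real.one_le_sqrt.mpr hn1
  have hs0 : 0 < Real.sqrt n := by linarith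
  have ht0 : 0 ≤ Real.sqrt n * δ := by positivity
  have ht : Real.sqrt n * δ ≤ 1 / (n : ℝ) ^ 2 := by
    calc Real.sqrt n * δ ≤ (n : ℝ) ^ (1 / 2 : ℝ) * (n : ℝ) ^ (-(5 : ℝ) / 2) := by
          rw [← Real.sqrt_eq_rpow]
          gcongr
      _ = (n : ℝ) ^ (-(2 : ℝ)) := by
          rw [← Real.rpow_add hn0]
          norm_num
      _ = 1 / (n : ℝ) ^ 2 := by
          rw [Real.rpow_neg hn0.le, one_div]
          norm_cast
  have hδ1 : δ ≤ 1 := hδ.trans (Real.rpow_le_one_of_one_le_of_nonpos hn1 (by norm_num))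
  have hq0 : 0 ≤ δ / Real.sqrt n := by positivity
  have hq1 : δ / Real.sqrt n ≤ 1 := by
    rw [div_le_one hs0]
    linarith
  have hbern : 1 - Real.sqrt n * δ ≤ (1 - δ / Real.sqrt n) ^ n := by
    have h := one_add_mul_le_pow (a := -(δ / Real.sqrt n)) (by linarith) n
    have e : (n : ℝ) * (δ / Real.sqrt n) = Real.sqrt n * δ := by
      rw [mul_div_assoc', mul_div_right_comm, Real.div_sqrt]
    rw [← sub_eq_add_neg] at h
    linarith
  have hp1 : (1 - δ / Real.sqrt n) ^ n ≤ 1 := pow_le_one₀ (by linarith) (by linarith)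
  have h3 : 3 / (n : ℝ) ^ 2 = 3 * (1 / (n : ℝ) ^ 2) := by ring
  rw [h3, mul_assoc 2]
  generalize (1 - δ / Real.sqrt n) ^ n = p at *
  generalize Real.sqrt n * δ = t at *
  rcases le_total 0 (1 - 2 * t) with h | h
  · nlinarith [mul_le_mul_of_nonneg_right hbern h, sq_nonneg t]
  · nlinarith [mul_le_mul_of_nonpos_right hp1 h]
end

section
/- Let n ≥ 2 and let y ∈ ℝⁿ with 0 < ‖y‖ ≤ n^{−5/2}. Then there exists a symmetric positive definite n×n real matrix E such that ‖E u‖ ≤ 1 − ⟨u, y⟩ for every unit vector u ∈ ℝⁿ, and det E ≥ 1 − 3 n^{−2}. -/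
/-!
Write `t = ‖y‖`, `w = t / √n`, `α = 2√n / t`, and take `E = (1 - w) (I - α y yᵀ)`.
With `a = √n t = w n ≤ n⁻²`, the matrix `E` has the eigenvalue `(1 - w) (1 - 2a)` along `y` and
`1 - w` on the orthogonal complement of `y`.  Hence `E` is positive definite, and Bernoulli's
inequality gives `det E = (1 - w)ⁿ (1 - 2a) ≥ (1 - a) (1 - 2a) ≥ 1 - 3a`.

For a unit vector `u`, put `⟪u, y⟫ = w x`.  Then `‖E u‖² = (1 - w)² (1 - 4q)` with
`q = w (1 - a) x²`.  As `1 - 4q ≤ (1 - 2q)²`, feasibility reduces to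
`(1 - w) (1 - 2q) ≤ 1 - w x`, that is, to `x ≤ 1 + 2 (1 - w) (1 - a) x²`; this quadratic
inequality holds because `a ≤ 1/4` and `w ≤ 1/8`.
-/

open scoped RealInnerProductSpace
open Matrix

/-- The matrix `β (I - α v vᵀ)`. -/
def rankOneShrink {n : ℕ} (β α : ℝ) (v : Fin n → ℝ) : Matrix (Fin n) (Fin n) ℝ :=
  β • (1 - α • vecMulVec v v)

lemma rankOneShrink_mulVec {n : ℕ} (β α : ℝ) (v u : Fin n → ℝ) :
    rankOneShrink β α v *ᵥ u = β • (u - (α * (v ⬝ᵥ u)) • v) := by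
  ext i
  simp [rankOneShrink, smul_mulVec, sub_mulVec, vecMulVec_mulVec]
  left
  ring

lemma det_rankOneShrink {n : ℕ} (β α : ℝ) (v : Fin n → ℝ) :
    (rankOneShrink β α v).det = β ^ n * (1 - α * (v ⬝ᵥ v)) := by
  have h : (1 - α • vecMulVec v v : Matrix (Fin n) (Fin n) ℝ)
      = 1 + replicateCol Unit (-α • v) * replicateRow Unit v := by
    ext i j
    simp [vecMulVec_apply, Matrix.mul_apply]
    ring
  rw [rankOneShrink, det_smul, h, det_one_add_replicateCol_mul_replicateRow]
  simp
  left
  ring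

lemma isHermitian_rankOneShrink {n : ℕ} (β α : ℝ) (v : Fin n → ℝ) :
    (rankOneShrink β α v).IsHermitian := by
  ext i j
  simp [rankOneShrink, vecMulVec_apply, Matrix.one_apply, eq_comm, mul_comm (v i)]

lemma toEuclideanLin_rankOneShrink {n : ℕ} (β α : ℝ) (y u : EuclideanSpace ℝ (Fin n)) :
    Matrix.toEuclideanLin (rankOneShrink β α y.ofLp) u = β • (u - (α * ⟪u, y⟫) • y) := by
  rw [toLpLin_apply, rankOneShrink_mulVec]
  rfl

lemma norm_sq_toEuclideanLin_rankOneShrink {n : ℕ} (β α : ℝ) (y u : EuclideanSpace ℝ (Fin n)) :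
    ‖Matrix.toEuclideanLin (rankOneShrink β α y.ofLp) u‖ ^ 2
      = β ^ 2 * (‖u‖ ^ 2 - 2 * α * ⟪u, y⟫ ^ 2 + α ^ 2 * ⟪u, y⟫ ^ 2 * ‖y‖ ^ 2) := by
  rw [toEuclideanLin_rankOneShrink, norm_smul, mul_pow, norm_sub_sq_real, norm_smul,
    inner_smul_right, Real.norm_eq_abs, Real.norm_eq_abs, mul_pow, sq_abs, sq_abs]
  ring

lemma posDef_rankOneShrink {n : ℕ} {β α : ℝ} (y : EuclideanSpace ℝ (Fin n))
    (hβ : 0 < β) (hα : 0 ≤ α) (h : α * ‖y‖ ^ 2 < 1) :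
    (rankOneShrink β α y.ofLp).PosDef := by
  refine .of_dotProduct_mulVec_pos (isHermitian_rankOneShrink _ _ _) fun x hx ↦ ?_
  set u : EuclideanSpace ℝ (Fin n) := WithLp.toLp 2 x with hu
  have hu0 : 0 < ‖u‖ := by
    rw [norm_pos_iff]
    intro h0
    exact hx (by simpa [hu] using h0)
  have e : star x ⬝ᵥ (rankOneShrink β α y.ofLp *ᵥ x)
      = ⟪u, Matrix.toEuclideanLin (rankOneShrink β α y.ofLp) u⟫ := by
    rw [EuclideanSpace.inner_eq_star_dotProduct, dotProduct_comm]
    rfl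
  rw [e, toEuclideanLin_rankOneShrink, inner_smul_right, inner_sub_right, inner_smul_right,
    real_inner_self_eq_norm_sq]
  have hcs : ⟪u, y⟫ ^ 2 ≤ ‖u‖ ^ 2 * ‖y‖ ^ 2 := by
    rw [← mul_pow, ← sq_abs]
    exact pow_le_pow_left₀ (abs_nonneg _) (abs_real_inner_le_norm u y) 2
  have h1 := mul_le_mul_of_nonneg_left hcs hα
  have h2 := mul_lt_mul_of_pos_left h (pow_pos hu0 2)
  exact mul_pos hβ (by nlinarith)

/-- The scalar form of feasibility, before taking square roots. -/
lemma scalar_feasibility {w a x : ℝ} (hw : 0 ≤ w) (hw8 : w ≤ 1 / 8) (ha : a ≤ 1 / 4)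
    (hq : 4 * (w * (1 - a) * x ^ 2) ≤ 1) :
    (1 - w) ^ 2 * (1 - 4 * (w * (1 - a) * x ^ 2)) ≤ (1 - w * x) ^ 2 := by
  set q := w * (1 - a) * x ^ 2 with hqdef
  have hk : (21 : ℝ) / 32 ≤ (1 - w) * (1 - a) := by nlinarith
  have hx : x ≤ 1 + 2 * ((1 - w) * (1 - a)) * x ^ 2 := by
    nlinarith [mul_le_mul_of_nonneg_right hk (sq_nonneg x), sq_nonneg (x - 1 / 2)]
  have h1 : (1 - w) * (1 - 2 * q) ≤ 1 - w * x := by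
    have := mul_le_mul_of_nonneg_left hx hw
    rw [hqdef]
    linarith
  have h0 : 0 ≤ (1 - w) * (1 - 2 * q) := mul_nonneg (by linarith) (by linarith)
  calc (1 - w) ^ 2 * (1 - 4 * q) ≤ (1 - w) ^ 2 * (1 - 2 * q) ^ 2 :=
        mul_le_mul_of_nonneg_left (by nlinarith [sq_nonneg q]) (sq_nonneg _)
    _ = ((1 - w) * (1 - 2 * q)) ^ 2 := by ring
    _ ≤ (1 - w * x) ^ 2 := pow_le_pow_left₀ h0 h1 2

theorem exists_feasible_ellipsoid_det_lower_bound
    (n : ℕ) (hn : 2 ≤ n) (y : EuclideanSpace ℝ (Fin n))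
    (hy0 : 0 < ‖y‖) (hy : ‖y‖ ≤ (n : ℝ) ^ (-(5 : ℝ) / 2)) :
    ∃ E : Matrix (Fin n) (Fin n) ℝ, E.PosDef ∧
      (∀ u : EuclideanSpace ℝ (Fin n), ‖u‖ = 1 →
        ‖Matrix.toEuclideanLin E u‖ ≤ 1 - ⟪u, y⟫) ∧
      1 - 3 / (n : ℝ) ^ 2 ≤ E.det := by
  have hN : (2 : ℝ) ≤ n := by exact_mod_cast hn
  have hN0 : (0 : ℝ) < n := by linarith
  have hs0 : 0 < √(n : ℝ) := Real.sqrt_pos.mpr hN0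
  have hs2 : √(n : ℝ) ^ 2 = n := Real.sq_sqrt hN0.le
  have ha : √(n : ℝ) * ‖y‖ ≤ 1 / (n : ℝ) ^ 2 := by
    calc √(n : ℝ) * ‖y‖ ≤ √(n : ℝ) * (n : ℝ) ^ (-(5 : ℝ) / 2) :=
          mul_le_mul_of_nonneg_left hy hs0.le
      _ = (n : ℝ) ^ (-(2 : ℝ)) := by
          rw [Real.sqrt_eq_rpow, ← Real.rpow_add hN0]
          norm_num
      _ = 1 / (n : ℝ) ^ 2 := by
          rw [Real.rpow_neg hN0.le, one_div]
          norm_num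
  have hn4 : 1 / (n : ℝ) ^ 2 ≤ 1 / 4 := by
    apply one_div_le_one_div_of_le <;> nlinarith
  obtain ⟨w, hw⟩ : ∃ w, w = ‖y‖ / √(n : ℝ) := ⟨_, rfl⟩
  obtain ⟨α, hα⟩ : ∃ α, α = 2 * √(n : ℝ) / ‖y‖ := ⟨_, rfl⟩
  have hw0 : 0 < w := hw ▸ div_pos hy0 hs0
  have hα0 : 0 < α := hα ▸ div_pos (by linarith) hy0
  have hαw : α * w = 2 := by
    rw [hα, hw]
    field_simp
  have hyw : ‖y‖ = w * √(n : ℝ) := by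
    rw [hw]
    field_simp
  have ht2 : ‖y‖ ^ 2 = w ^ 2 * n := by rw [hyw, mul_pow, hs2]
  have haw : w * n ≤ 1 / (n : ℝ) ^ 2 := by
    calc w * n = √(n : ℝ) * ‖y‖ := by
          rw [hyw]
          nlinarith
      _ ≤ _ := ha
  have hαt : α * ‖y‖ ^ 2 = 2 * (w * n) := by
    rw [ht2, ← hαw]
    ring
  have ha4 : w * n ≤ 1 / 4 := haw.trans hn4
  have hw8 : w ≤ 1 / 8 := by nlinarith
  have ha0 : 0 < w * n := mul_pos hw0 hN0
  refine ⟨rankOneShrink (1 - w) α y.ofLp,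
    posDef_rankOneShrink y (by linarith) hα0.le (by linarith), fun u hu ↦ ?_, ?_⟩
  · have hp := abs_real_inner_le_norm u y
    rw [hu, one_mul] at hp
    obtain ⟨x, hx⟩ : ∃ x, ⟪u, y⟫ = w * x := ⟨⟪u, y⟫ / w, by field_simp⟩
    have hy1 : ‖y‖ ≤ 1 := by nlinarith
    have hp1 : w * x ≤ 1 := hx ▸ (le_abs_self _).trans (hp.trans hy1)
    -- Cauchy–Schwarz in the rescaled variable: `w² x² ≤ ‖y‖² = w² n`.
    have hxn : x ^ 2 ≤ n := by
      have h := pow_le_pow_left₀ (abs_nonneg _) hp 2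
      rw [sq_abs, hx, ht2, mul_pow] at h
      exact le_of_mul_le_mul_left h (by positivity)
    have hq : 4 * (w * (1 - w * n) * x ^ 2) ≤ 1 := by
      have h1 := mul_le_mul_of_nonneg_left hxn hw0.le
      have h2 : 0 ≤ w * n * (w * x ^ 2) := by positivity
      nlinarith
    have key := scalar_feasibility hw0.le hw8 ha4 hq
    rw [hx]
    refine le_of_sq_le_sq ?_ (by linarith)
    rw [norm_sq_toEuclideanLin_rankOneShrink, hu, hx, ht2]
    refine le_of_eq_of_le ?_ key
    have e1 : α * (w * x) ^ 2 = 2 * (w * x ^ 2) := by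
      rw [← hαw]
      ring
    have e2 : α ^ 2 * (w * x) ^ 2 * (w ^ 2 * n) = 4 * (w ^ 2 * n * x ^ 2) := by
      calc _ = (α * w) ^ 2 * (w ^ 2 * n * x ^ 2) := by ring
        _ = _ := by rw [hαw]; norm_num
    rw [e2, mul_assoc 2, e1]
    ring
  · have hdot : y.ofLp ⬝ᵥ y.ofLp = ‖y‖ ^ 2 := by
      rw [← real_inner_self_eq_norm_sq]
      rfl
    rw [det_rankOneShrink, hdot, hαt]
    have hB := one_add_mul_le_pow (a := -w) (by linarith) n
    rw [← sub_eq_add_neg] at hB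
    have h1 := mul_le_mul_of_nonneg_right hB (show 0 ≤ 1 - 2 * (w * n) by linarith)
    have h2 : 3 / (n : ℝ) ^ 2 = 3 * (1 / (n : ℝ) ^ 2) := by ring
    nlinarith [sq_nonneg (w * n)]
end

section
/- Let n ≥ 2 and let E be a symmetric positive definite n×n real matrix with det E ≥ 1 − n^{−2} and tr(E²) ≤ n + n^{−2}. Then every eigenvalue of E is at least 1 − 2/n. -/
/-!
Let `λ i` be the eigenvalues of `E` and `D = det E = ∏ λ i`. From `log x ≤ x - 1` we get
`(x - 1) ^ 2 ≤ x ^ 2 - 1 - 2 * log x` for `x > 0`, whose right-hand side is therefore nonnegative.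
Summing over the spectrum,
`∑ (λ i - 1) ^ 2 ≤ tr (E * E) - n - 2 * log D ≤ 1 / n ^ 2 - 2 * log (1 - 1 / n ^ 2)`.
Since `n ≥ 2`, the bound `1 - 1 / x ≤ log x` gives
`-log (1 - 1 / n ^ 2) ≤ (1 / n ^ 2) / (1 - 1 / n ^ 2) ≤ (4 / 3) / n ^ 2`, so the sum is at most
`(11 / 3) / n ^ 2 < (2 / n) ^ 2`, and every eigenvalue lies within `2 / n` of `1`.
-/

theorem trace_mul_self_eq_sum_eigenvalues_sq {n : ℕ} {E : Matrix (Fin n) (Fin n) ℝ}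
    (hE : E.IsHermitian) : (E * E).trace = ∑ i, hE.eigenvalues i ^ 2 := by
  conv_lhs => rw [hE.spectral_theorem]
  rw [← map_mul, Unitary.conjStarAlgAut_apply, Matrix.trace_mul_cycle, Unitary.coe_star_mul_self,
    one_mul, Matrix.diagonal_mul_diagonal, Matrix.trace_diagonal]
  simp [pow_two]

theorem sub_one_sq_le_sq_sub_log {x : ℝ} (hx : 0 < x) :
    (x - 1) ^ 2 ≤ x ^ 2 - 1 - 2 * Real.log x := by
  nlinarith [Real.log_le_sub_one_of_pos hx]

theorem eigenvalue_lower_bound_from_det_and_trace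
    (n : ℕ) (hn : 2 ≤ n) (E : Matrix (Fin n) (Fin n) ℝ) (hE : E.PosDef)
    (hdet : 1 - 1 / (n : ℝ) ^ 2 ≤ E.det)
    (htr : (E * E).trace ≤ (n : ℝ) + 1 / (n : ℝ) ^ 2) :
    ∀ i, 1 - 2 / (n : ℝ) ≤ hE.1.eigenvalues i := by
  intro i
  have hpos : ∀ j, 0 < hE.1.eigenvalues j := hE.eigenvalues_pos
  have hn' : (2 : ℝ) ≤ n := by exact_mod_cast hn
  have hdet_eq : E.det = ∏ j, hE.1.eigenvalues j := by
    simpa using hE.1.det_eq_prod_eigenvalues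
  have hlog : Real.log E.det = ∑ j, Real.log (hE.1.eigenvalues j) := by
    rw [hdet_eq, Real.log_prod fun j _ => (hpos j).ne']
  have hsum : ∑ j, (hE.1.eigenvalues j - 1) ^ 2 ≤ (E * E).trace - n - 2 * Real.log E.det := by
    calc ∑ j, (hE.1.eigenvalues j - 1) ^ 2
        ≤ ∑ j, (hE.1.eigenvalues j ^ 2 - 1 - 2 * Real.log (hE.1.eigenvalues j)) :=
          Finset.sum_le_sum fun j _ => sub_one_sq_le_sq_sub_log (hpos j)
      _ = (E * E).trace - n - 2 * Real.log E.det := by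
          rw [hlog, trace_mul_self_eq_sum_eigenvalues_sq hE.1, Finset.mul_sum,
            Finset.sum_sub_distrib, Finset.sum_sub_distrib]
          simp
  have hi : (hE.1.eigenvalues i - 1) ^ 2 ≤ ∑ j, (hE.1.eigenvalues j - 1) ^ 2 :=
    Finset.single_le_sum (f := fun j => (hE.1.eigenvalues j - 1) ^ 2)
      (fun j _ => sq_nonneg _) (Finset.mem_univ i)
  set x : ℝ := 1 / (n : ℝ) ^ 2 with hx
  have hx0 : 0 < x := by positivity
  have hx4 : x ≤ 1 / 4 := by
    rw [hx]
    exact one_div_le_one_div_of_le (by norm_num) (by nlinarith)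
  have hx1 : 0 < 1 - x := by linarith
  have hlogD : -(4 / 3 * x) ≤ Real.log E.det := by
    have h1 := Real.one_sub_inv_le_log_of_pos hx1
    have h2 := Real.log_le_log hx1 hdet
    have h3 : (1 - x)⁻¹ ≤ 1 + 4 / 3 * x := by
      rw [inv_le_iff_one_le_mul₀ hx1]
      nlinarith
    linarith
  have hsq : (2 / (n : ℝ)) ^ 2 = 4 * x := by rw [hx]; ring
  have habs : |hE.1.eigenvalues i - 1| ≤ 2 / (n : ℝ) :=
    abs_le_of_sq_le_sq (by linarith) (by positivity)
  linarith [(abs_le.mp habs).1]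
end

section
/- Let n ≥ 1, let v ∈ ℝⁿ be a unit vector, and let t be a real number with 0 ≤ t ≤ 1/√n. Let B denote the closed unit Euclidean ball centered at the origin in ℝⁿ and let H = {z ∈ ℝⁿ : ⟨v, z⟩ ≥ t} be the halfspace at distance t from the origin. Then the Lebesgue measure satisfies λ(H ∩ B) ≥ (1/2)(1 − t√n)·λ(B). -/
/-!
By central symmetry the half ball `{0 ≤ ⟪v, z⟫}` carries at least half of the volume of the unit
ball `B`, so it suffices to show that the slab `{0 ≤ ⟪v, z⟫ < t}` of `B`, which is what the cap
omits, has volume at most `(t √n / 2) λ(B)`.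

In orthonormal coordinates with first vector `v`, the slab lies in the cylinder
`[0, t) × Bⁿ⁻¹` over the central section (`volume_slab_le`). With `κ_m` the volume of the unit ball
of `ℝᵐ`, this leaves the dimensional estimate `κ_{n-1} ≤ (√n / 2) κ_n` (`volume_section_le`). By
`κ_m = π^{m/2} / Γ(m/2 + 1)` it is a bound on a ratio of Gamma values (`Gamma_ratio_le`): an
equality for `n = 1`, and for `n ≥ 2` a consequence of the log-convexity bound
`Γ(x + 1/2) ≤ √x Γ(x)` and `2 (n + 1) ≤ π n`.
-/

open scoped RealInnerProductSpace
open MeasureTheory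

/-- The unit ball of `ℝᵐ` has volume `√π ^ m / Γ(m / 2 + 1)`, including in dimension `m = 0`. -/
lemma volume_unit_closedBall (m : ℕ) :
    volume (Metric.closedBall (0 : EuclideanSpace ℝ (Fin m)) 1)
      = ENNReal.ofReal (Real.sqrt Real.pi ^ m / Real.Gamma (m / 2 + 1)) := by
  rcases m with _ | m
  · rw [volume_euclideanSpace_eq_dirac, Measure.dirac_apply_of_mem (by simp)]
    simp
  · rw [EuclideanSpace.volume_closedBall]
    simp

/-- Log-convexity of `Γ` between `x` and `x + 1`, at the midpoint. -/
lemma Gamma_add_half_le {x : ℝ} (hx : 0 < x) :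
    Real.Gamma (x + 1 / 2) ≤ Real.sqrt x * Real.Gamma x := by
  have hG := Real.Gamma_pos_of_pos hx
  have h := Real.Gamma_mul_add_mul_le_rpow_Gamma_mul_rpow_Gamma hx (by linarith : 0 < x + 1)
    (by norm_num : (0 : ℝ) < 1 / 2) (by norm_num : (0 : ℝ) < 1 / 2) (by norm_num)
  rw [← Real.sqrt_eq_rpow, ← Real.sqrt_eq_rpow, Real.Gamma_add_one hx.ne',
    Real.sqrt_mul hx.le, show 1 / 2 * x + 1 / 2 * (x + 1) = x + 1 / 2 by ring] at h
  calc Real.Gamma (x + 1 / 2)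
      ≤ Real.sqrt (Real.Gamma x) * (Real.sqrt x * Real.sqrt (Real.Gamma x)) := h
    _ = Real.sqrt x * (Real.sqrt (Real.Gamma x) * Real.sqrt (Real.Gamma x)) := by ring
    _ = Real.sqrt x * Real.Gamma x := by rw [Real.mul_self_sqrt hG.le]

lemma Gamma_ratio_le (m : ℕ) :
    Real.Gamma ((m + 1 : ℕ) / 2 + 1)
      ≤ 1 / 2 * Real.sqrt (m + 1 : ℕ) * Real.sqrt Real.pi * Real.Gamma (m / 2 + 1) := by
  rcases m with _ | m
  · -- In dimension one the estimate is an equality, and log-convexity would lose too much.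
    have h : Real.Gamma (1 / 2 + 1) = 1 / 2 * Real.sqrt Real.pi := by
      rw [Real.Gamma_add_one (by norm_num), Real.Gamma_one_half_eq]
    simp only [zero_add, Nat.cast_one, Nat.cast_zero, zero_div, Real.Gamma_one, Real.sqrt_one,
      mul_one]
    exact h.le
  · have hx : (0 : ℝ) < (m + 1 : ℕ) / 2 + 1 := by positivity
    have h := Gamma_add_half_le hx
    rw [show ((m + 1 : ℕ) / 2 + 1 + 1 / 2 : ℝ) = (m + 1 + 1 : ℕ) / 2 + 1 by push_cast; ring] at h
    refine h.trans (mul_le_mul_of_nonneg_right ?_ (Real.Gamma_pos_of_pos hx).le)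
    rw [mul_assoc, ← Real.sqrt_mul (by positivity)]
    refine Real.sqrt_le_iff.mpr ⟨by positivity, ?_⟩
    rw [mul_pow, Real.sq_sqrt (by positivity)]
    push_cast
    have hm : (0 : ℝ) ≤ m := m.cast_nonneg
    nlinarith [Real.pi_gt_three]

/-- The central section of the unit ball of `ℝᵐ⁺¹` has `m`-volume at most `√(m + 1) / 2` times the
volume of the ball. -/
lemma volume_section_le (m : ℕ) :
    volume (Metric.closedBall (0 : EuclideanSpace ℝ (Fin m)) 1)
      ≤ ENNReal.ofReal (1 / 2 * Real.sqrt (m + 1 : ℕ))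
        * volume (Metric.closedBall (0 : EuclideanSpace ℝ (Fin (m + 1))) 1) := by
  rw [volume_unit_closedBall, volume_unit_closedBall, ← ENNReal.ofReal_mul (by positivity)]
  refine ENNReal.ofReal_le_ofReal ?_
  have h1 : 0 < Real.Gamma ((m : ℝ) / 2 + 1) := Real.Gamma_pos_of_pos (by positivity)
  have h2 : 0 < Real.Gamma (((m + 1 : ℕ) : ℝ) / 2 + 1) := Real.Gamma_pos_of_pos (by positivity)
  rw [← mul_div_assoc, div_le_div_iff₀ h1 h2, pow_succ]
  calc Real.sqrt Real.pi ^ m * Real.Gamma (((m + 1 : ℕ) : ℝ) / 2 + 1)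
      ≤ Real.sqrt Real.pi ^ m * (1 / 2 * Real.sqrt (m + 1 : ℕ) * Real.sqrt Real.pi
          * Real.Gamma (m / 2 + 1)) := by
        gcongr
        exact Gamma_ratio_le m
    _ = _ := by ring

/-- The slab `0 ≤ ⟪v, z⟫ < t` of the unit ball lies in a cylinder of height `t` over the central
section of the ball. -/
lemma volume_slab_le (m : ℕ) (v : EuclideanSpace ℝ (Fin (m + 1))) (hv : ‖v‖ = 1) (t : ℝ) :
    volume ({z : EuclideanSpace ℝ (Fin (m + 1)) | 0 ≤ ⟪v, z⟫ ∧ ⟪v, z⟫ < t} ∩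
        Metric.closedBall (0 : EuclideanSpace ℝ (Fin (m + 1))) 1)
      ≤ ENNReal.ofReal t * volume (Metric.closedBall (0 : EuclideanSpace ℝ (Fin m)) 1) := by
  -- Orthonormal coordinates in which `v` is the first basis vector.
  obtain ⟨b, hb⟩ : ∃ b : OrthonormalBasis (Fin (m + 1)) ℝ (EuclideanSpace ℝ (Fin (m + 1))),
      b 0 = v := by
    have ho : Orthonormal ℝ (({0} : Set (Fin (m + 1))).domRestrict fun _ => v) := by
      refine ⟨fun _ => hv, fun i j hij => ?_⟩
      exact absurd (Subsingleton.elim i j) hij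
    obtain ⟨b, hb⟩ := ho.exists_orthonormalBasis_extension_of_card_eq (by simp)
    exact ⟨b, hb 0 rfl⟩
  have hmp := ((volume_preserving_piFinSuccAbove (fun _ : Fin (m + 1) => ℝ) 0).comp
    (PiLp.volume_preserving_ofLp (Fin (m + 1)))).comp b.measurePreserving_repr
  have hC : MeasurableSet (WithLp.toLp 2 ⁻¹'
      Metric.closedBall (0 : EuclideanSpace ℝ (Fin m)) 1) :=
    (PiLp.volume_preserving_toLp (Fin m)).measurable Metric.isClosed_closedBall.measurableSet
  have hP := hmp.measure_preimage
    ((measurableSet_Ico (a := (0 : ℝ)) (b := t)).prod hC).nullMeasurableSet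
  have hvol : volume (Set.Ico (0 : ℝ) t ×ˢ (WithLp.toLp 2 ⁻¹'
      Metric.closedBall (0 : EuclideanSpace ℝ (Fin m)) 1))
      = ENNReal.ofReal t * volume (Metric.closedBall (0 : EuclideanSpace ℝ (Fin m)) 1) := by
    rw [Measure.volume_eq_prod, Measure.prod_prod,
      (PiLp.volume_preserving_toLp (Fin m)).measure_preimage
      Metric.isClosed_closedBall.measurableSet.nullMeasurableSet, Real.volume_Ico, sub_zero]
  rw [← hvol, ← hP]
  refine measure_mono ?_
  rintro z ⟨⟨h0, h1⟩, hz⟩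
  have hz0 : b.repr z 0 = ⟪v, z⟫ := by rw [b.repr_apply_apply, hb]
  have hn : ‖b.repr z‖ ≤ 1 := by
    rw [LinearIsometryEquiv.norm_map]
    simpa using hz
  refine ⟨⟨?_, ?_⟩, ?_⟩
  · simpa [hz0] using h0
  · simpa [hz0] using h1
  · rw [Set.mem_preimage, mem_closedBall_zero_iff, ← sq_le_one_iff₀ (norm_nonneg _),
      EuclideanSpace.norm_sq_eq]
    rw [← sq_le_one_iff₀ (norm_nonneg _), EuclideanSpace.norm_sq_eq, Fin.sum_univ_succ] at hn
    simp [Fin.tail] at hn ⊢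
    linarith [sq_nonneg (b.repr z 0)]

/-- A half ball has at least half the volume of the ball, by central symmetry. -/
lemma volume_ball_le_two_mul_half {n : ℕ} (v : EuclideanSpace ℝ (Fin n)) :
    volume (Metric.closedBall (0 : EuclideanSpace ℝ (Fin n)) 1)
      ≤ 2 * volume ({z : EuclideanSpace ℝ (Fin n) | 0 ≤ ⟪v, z⟫} ∩
        Metric.closedBall (0 : EuclideanSpace ℝ (Fin n)) 1) := by
  set S := {z : EuclideanSpace ℝ (Fin n) | 0 ≤ ⟪v, z⟫} ∩
    Metric.closedBall (0 : EuclideanSpace ℝ (Fin n)) 1 with hS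
  calc volume (Metric.closedBall (0 : EuclideanSpace ℝ (Fin n)) 1)
      ≤ volume (S ∪ -S) := by
        refine measure_mono fun z hz => ?_
        rcases le_total 0 ⟪v, z⟫ with h | h
        · exact Or.inl ⟨h, hz⟩
        · exact Or.inr ⟨by simpa using h, by simpa using hz⟩
    _ ≤ volume S + volume (-S) := measure_union_le _ _
    _ = 2 * volume S := by rw [Measure.measure_neg, two_mul]

theorem spherical_cap_volume_lower_bound
    (n : ℕ) (hn : 1 ≤ n) (v : EuclideanSpace ℝ (Fin n)) (hv : ‖v‖ = 1)
    (t : ℝ) (ht0 : 0 ≤ t) (ht : t ≤ 1 / Real.sqrt n) :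
    ENNReal.ofReal ((1 / 2) * (1 - t * Real.sqrt n)) *
        volume (Metric.closedBall (0 : EuclideanSpace ℝ (Fin n)) 1)
      ≤ volume ({z : EuclideanSpace ℝ (Fin n) | t ≤ ⟪v, z⟫} ∩
          Metric.closedBall (0 : EuclideanSpace ℝ (Fin n)) 1) := by
  obtain ⟨m, rfl⟩ : ∃ m, n = m + 1 := ⟨n - 1, by omega⟩
  set B := Metric.closedBall (0 : EuclideanSpace ℝ (Fin (m + 1))) 1 with hB
  set cap := {z : EuclideanSpace ℝ (Fin (m + 1)) | t ≤ ⟪v, z⟫} ∩ B with hcap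
  have hBfin : volume B ≠ ⊤ := measure_closedBall_lt_top.ne
  have hcapfin : volume cap ≠ ⊤ := measure_ne_top_of_subset Set.inter_subset_right hBfin
  have hslab : volume ({z : EuclideanSpace ℝ (Fin (m + 1)) | 0 ≤ ⟪v, z⟫ ∧ ⟪v, z⟫ < t} ∩ B)
      ≤ ENNReal.ofReal (t * (1 / 2 * Real.sqrt (m + 1 : ℕ))) * volume B := by
    rw [ENNReal.ofReal_mul ht0, mul_assoc]
    exact (volume_slab_le m v hv t).trans (by gcongr; exact volume_section_le m)
  have hhalf : volume ({z : EuclideanSpace ℝ (Fin (m + 1)) | 0 ≤ ⟪v, z⟫} ∩ B) ≤ volume cap +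
      volume ({z : EuclideanSpace ℝ (Fin (m + 1)) | 0 ≤ ⟪v, z⟫ ∧ ⟪v, z⟫ < t} ∩ B) := by
    refine (measure_mono ?_).trans (measure_union_le _ _)
    rintro z ⟨h0, hz⟩
    rcases le_or_gt t ⟪v, z⟫ with h | h
    · exact Or.inl ⟨h, hz⟩
    · exact Or.inr ⟨⟨h0, h⟩, hz⟩
  have hall : volume B ≤ 2 * (volume cap +
      ENNReal.ofReal (t * (1 / 2 * Real.sqrt (m + 1 : ℕ))) * volume B) :=
    (volume_ball_le_two_mul_half v).trans (by gcongr; exact hhalf.trans (by gcongr))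
  -- All volumes are finite, so the inequality can be rearranged in `ℝ`.
  rw [← ENNReal.ofReal_toReal hBfin, ← ENNReal.ofReal_toReal hcapfin,
    ← ENNReal.ofReal_mul (by positivity), ← ENNReal.ofReal_add (by positivity) (by positivity),
    two_mul, ← ENNReal.ofReal_add (by positivity) (by positivity),
    ENNReal.ofReal_le_ofReal_iff (by positivity)] at hall
  rw [← ENNReal.ofReal_toReal hBfin, ← ENNReal.ofReal_toReal hcapfin,
    ← ENNReal.ofReal_mul' (by positivity)]
  refine ENNReal.ofReal_le_ofReal ?_
  linarith
end

section
/- Let n ≥ 1, r > 0, and t ∈ [0, 1]. If x, y ∈ ℝⁿ satisfy ‖y − x‖ ≤ rt/√n, then the Lebesgue measure of the intersection of the closed balls of radius r centered at x and at y satisfies λ(B(x, r) ∩ B(y, r)) ≥ (1 − t)·λ(B(x, r)). Consequently, the total variation distance between the uniform probability measures on B(x, r) and on B(y, r) is at most t. -/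
/-!
Everything follows from the bound `λ(B(x, r) \ B(y, r)) ≤ t λ(B(x, r))` (`volume_diff_le`). Let
`d = ‖y - x‖` and let `ω_k` be the volume of the `k`-dimensional unit ball. Each line parallel to
`y - x` meets `B(x, r)` in a segment and `B(y, r)` in the same segment shifted by `d`, so it meets the
difference in length at most `d`; only lines at distance at most `r` from `x` contribute. By Fubini
the difference has volume at most `d ω_{n-1} r^{n-1}` (`volume_diff_shift_le`). Log-convexity of the
Gamma function gives `ω_{n-1} ≤ √n ω_n` (`gamma_ratio_le`), so this is at most
`(d √n / r) ω_n r^n ≤ t λ(B(x, r))`.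
-/

open MeasureTheory

theorem exists_orthonormalBasis_zero_eq {G : Type*}
    [NormedAddCommGroup G] [InnerProductSpace ℝ G] [FiniteDimensional ℝ G] {m : ℕ}
    (hG : Module.finrank ℝ G = m + 1) {z : G} (hz : ‖z‖ = 1) :
    ∃ b : OrthonormalBasis (Fin (m + 1)) ℝ G, b 0 = z := by
  obtain ⟨b, hb⟩ := Orthonormal.exists_orthonormalBasis_extension_of_card_eq (𝕜 := ℝ)
    (ι := Fin (m + 1)) (by simpa using hG) (v := fun _ => z) (s := {0}) (by
      refine ⟨fun i => by simpa using hz, fun i j hij => ?_⟩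
      exact absurd (Subsingleton.elim i j) hij)
  exact ⟨b, hb 0 rfl⟩

theorem exists_isometryEquiv_map_unit {E F : Type*}
    [NormedAddCommGroup E] [InnerProductSpace ℝ E]
    [NormedAddCommGroup F] [InnerProductSpace ℝ F] {m : ℕ}
    [FiniteDimensional ℝ E] [FiniteDimensional ℝ F]
    (hE : Module.finrank ℝ E = m + 1) (hF : Module.finrank ℝ F = m + 1)
    {u : E} {w : F} (hu : ‖u‖ = 1) (hw : ‖w‖ = 1) :
    ∃ f : E ≃ₗᵢ[ℝ] F, f u = w := by
  obtain ⟨b, hb⟩ := exists_orthonormalBasis_zero_eq hE hu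
  obtain ⟨c, hc⟩ := exists_orthonormalBasis_zero_eq hF hw
  exact ⟨b.equiv c (Equiv.refl _), by rw [← hb, ← hc]; simp⟩

/-- In `ℝ × ℝᵐ`, the part of a ball of radius `r` not covered by its translate by `d` along the first
axis has volume at most `d` times the volume of the `m`-dimensional ball of radius `r`: each line
parallel to the axis meets it in a set of length at most `d`, and in nothing if the line is at
distance more than `r` from the centre. -/
theorem volume_diff_shift_le (m : ℕ) {r d : ℝ} (hr : 0 ≤ r) (hd : 0 ≤ d) :
    volume (Metric.closedBall (0 : WithLp 2 (ℝ × EuclideanSpace ℝ (Fin m))) r \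
        Metric.closedBall (WithLp.toLp 2 (d, 0)) r)
      ≤ ENNReal.ofReal d * volume (Metric.closedBall (0 : EuclideanSpace ℝ (Fin m)) r) := by
  have hmeas : MeasurableSet (Metric.closedBall (0 : WithLp 2 (ℝ × EuclideanSpace ℝ (Fin m))) r \
        Metric.closedBall (WithLp.toLp 2 (d, 0)) r) :=
    measurableSet_closedBall.diff measurableSet_closedBall
  have hpres := WithLp.volume_preserving_toLp ℝ (EuclideanSpace ℝ (Fin m))
  rw [← hpres.measure_preimage hmeas.nullMeasurableSet, Measure.volume_eq_prod,
    Measure.prod_apply_symm (hpres.measurable hmeas),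
    ← lintegral_indicator_const measurableSet_closedBall]
  refine lintegral_mono fun v => ?_
  have hsub : (fun s : ℝ => (s, v)) ⁻¹' (WithLp.toLp 2 ⁻¹'
      (Metric.closedBall (0 : WithLp 2 (ℝ × EuclideanSpace ℝ (Fin m))) r \
        Metric.closedBall (WithLp.toLp 2 (d, 0)) r)) ⊆
      {s | s ^ 2 + ‖v‖ ^ 2 ≤ r ^ 2 ∧ r ^ 2 < (s - d) ^ 2 + ‖v‖ ^ 2} := by
    rintro s ⟨h1, h2⟩
    rw [mem_closedBall_zero_iff, ← sq_le_sq₀ (norm_nonneg _) hr,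
      WithLp.prod_norm_sq_eq_of_L2] at h1
    rw [Metric.mem_closedBall, dist_eq_norm, ← sq_le_sq₀ (norm_nonneg _) hr,
      WithLp.prod_norm_sq_eq_of_L2] at h2
    simpa using And.intro h1 h2
  refine (measure_mono hsub).trans ?_
  by_cases hv : v ∈ Metric.closedBall (0 : EuclideanSpace ℝ (Fin m)) r
  · rw [Set.indicator_of_mem hv]
    rw [mem_closedBall_zero_iff] at hv
    have h0 : 0 ≤ r ^ 2 - ‖v‖ ^ 2 := by
      have := pow_le_pow_left₀ (norm_nonneg v) hv 2
      linarith
    -- The line over `v` meets the two balls in `[-h, h]` and `[d - h, d + h]`.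
    set h := √(r ^ 2 - ‖v‖ ^ 2) with hh
    have hsq : h ^ 2 = r ^ 2 - ‖v‖ ^ 2 := Real.sq_sqrt h0
    have hh0 : 0 ≤ h := Real.sqrt_nonneg _
    calc _ ≤ volume (Set.Ico (-h) (d - h)) := by
          refine measure_mono ?_
          rintro s ⟨h1, h2⟩
          have h3 : |s| ≤ h := abs_le_of_sq_le_sq (by linarith) hh0
          obtain ⟨h4, h5⟩ := abs_le.1 h3
          refine ⟨h4, ?_⟩
          by_contra! h6
          have : (s - d) ^ 2 ≤ h ^ 2 := sq_le_sq' (by linarith) (by linarith)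
          linarith
      _ = ENNReal.ofReal d := by rw [Real.volume_Ico]; congr 1; ring
  · have hlt : r < ‖v‖ := by simpa using hv
    have : {s : ℝ | s ^ 2 + ‖v‖ ^ 2 ≤ r ^ 2 ∧ r ^ 2 < (s - d) ^ 2 + ‖v‖ ^ 2} = ∅ := by
      ext s
      simp only [Set.mem_ofPred_eq, Set.mem_empty_iff_false, iff_false, not_and]
      intro h1
      nlinarith [sq_nonneg s]
    simp [this]

/-- The volume of a Euclidean ball, including dimension `0`, which `EuclideanSpace.volume_closedBall`
excludes and which is needed for the cross-section of a one-dimensional ball. -/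
theorem volume_closedBall_fin (m : ℕ) (r : ℝ) (hr : 0 ≤ r) (x : EuclideanSpace ℝ (Fin m)) :
    volume (Metric.closedBall x r) =
      ENNReal.ofReal (r ^ m * (√Real.pi ^ m / Real.Gamma (m / 2 + 1))) := by
  rcases m with _ | m
  · have : Metric.closedBall x r = Set.univ := by
      ext y; simp [Subsingleton.elim y x, hr]
    rw [this, ← (PiLp.volume_preserving_toLp (Fin 0)).measure_preimage
      MeasurableSet.univ.nullMeasurableSet]
    simp [volume_pi]
  · rw [EuclideanSpace.volume_closedBall, Fintype.card_fin, ENNReal.ofReal_mul (by positivity),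
      ENNReal.ofReal_pow hr]

/-- With `ω_m` the volume of the `m`-dimensional unit ball, this says `ω_m ≤ √(m + 1) ω_{m+1}`.
Log-convexity gives `Γ(s + 1/2) ≤ √(Γ(s) Γ(s + 1)) = √s Γ(s)` at `s = m/2 + 1`, and
`s ≤ (m + 1) π`. -/
theorem gamma_ratio_le (m : ℕ) :
    Real.Gamma ((m + 1 : ℝ) / 2 + 1) ≤ √(m + 1) * √Real.pi * Real.Gamma ((m : ℝ) / 2 + 1) := by
  set s : ℝ := (m : ℝ) / 2 + 1 with hs
  have hs0 : 0 < s := by positivity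
  have hG := Real.Gamma_pos_of_pos hs0
  have h := Real.Gamma_mul_add_mul_le_rpow_Gamma_mul_rpow_Gamma hs0 (by positivity : 0 < s + 1)
    (by norm_num : (0 : ℝ) < 1 / 2) (by norm_num : (0 : ℝ) < 1 / 2) (by norm_num)
  rw [Real.Gamma_add_one hs0.ne', ← Real.sqrt_eq_rpow, ← Real.sqrt_eq_rpow,
    Real.sqrt_mul hs0.le, mul_left_comm, Real.mul_self_sqrt hG.le] at h
  have e : (m + 1 : ℝ) / 2 + 1 = 1 / 2 * s + 1 / 2 * (s + 1) := by rw [hs]; ring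
  rw [e]
  refine h.trans (mul_le_mul_of_nonneg_right ?_ hG.le)
  rw [← Real.sqrt_mul (by positivity)]
  refine Real.sqrt_le_sqrt ?_
  have := Real.pi_gt_three
  have hm : (0 : ℝ) ≤ m := by positivity
  rw [hs]; nlinarith

/-- A cylinder of height `d ≤ r t / √(m + 1)` over the `m`-dimensional ball of radius `r` fills at most
a fraction `t` of the volume of the `(m + 1)`-dimensional ball of radius `r`. -/
theorem slab_le (m : ℕ) {r t d : ℝ} (hr : 0 < r) (hd : 0 ≤ d)
    (hdt : d ≤ r * t / √((m + 1 : ℕ) : ℝ)) (x : EuclideanSpace ℝ (Fin (m + 1))) :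
    ENNReal.ofReal d * volume (Metric.closedBall (0 : EuclideanSpace ℝ (Fin m)) r)
      ≤ ENNReal.ofReal t * volume (Metric.closedBall x r) := by
  have hn : 0 < √((m + 1 : ℕ) : ℝ) := by positivity
  have hdt' := (le_div_iff₀ hn).1 hdt
  have ht : 0 ≤ t := by
    by_contra! h
    nlinarith [mul_nonneg hd hn.le]
  rw [volume_closedBall_fin _ _ hr.le, volume_closedBall_fin _ _ hr.le,
    ← ENNReal.ofReal_mul hd, ← ENNReal.ofReal_mul ht]
  refine ENNReal.ofReal_le_ofReal ?_
  have g := gamma_ratio_le m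
  push_cast at *
  have G1 : 0 < Real.Gamma ((m : ℝ) / 2 + 1) := Real.Gamma_pos_of_pos (by positivity)
  have G2 : 0 < Real.Gamma ((m + 1 : ℝ) / 2 + 1) := Real.Gamma_pos_of_pos (by positivity)
  have hp : 0 < √Real.pi := Real.sqrt_pos.2 Real.pi_pos
  rw [← mul_assoc, ← mul_assoc, mul_div_assoc', mul_div_assoc', div_le_div_iff₀ G1 G2]
  calc _ ≤ d * r ^ m * √Real.pi ^ m *
        (√(m + 1) * √Real.pi * Real.Gamma ((m : ℝ) / 2 + 1)) := by gcongr
    _ = (d * √(m + 1)) * (r ^ m * √Real.pi ^ (m + 1) * Real.Gamma ((m : ℝ) / 2 + 1)) := by ring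
    _ ≤ (r * t) * (r ^ m * √Real.pi ^ (m + 1) * Real.Gamma ((m : ℝ) / 2 + 1)) := by gcongr
    _ = _ := by ring

theorem volume_diff_le (m : ℕ) {r t : ℝ} (hr : 0 < r)
    (x y : EuclideanSpace ℝ (Fin (m + 1)))
    (hxy : ‖y - x‖ ≤ r * t / √((m + 1 : ℕ) : ℝ)) :
    volume (Metric.closedBall x r \ Metric.closedBall y r)
      ≤ ENNReal.ofReal t * volume (Metric.closedBall x r) := by
  refine le_trans ?_ (slab_le m hr (norm_nonneg _) hxy x)
  rcases eq_or_ne y x with rfl | hne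
  · simp
  have hpos : 0 < ‖y - x‖ := norm_pos_iff.2 (sub_ne_zero.2 hne)
  -- Rotate so that the translation vector points along the first axis.
  obtain ⟨f, hf⟩ := exists_isometryEquiv_map_unit (E := EuclideanSpace ℝ (Fin (m + 1)))
    (F := WithLp 2 (ℝ × EuclideanSpace ℝ (Fin m))) (m := m) (by simp)
    (by
      rw [(WithLp.linearEquiv 2 ℝ (ℝ × EuclideanSpace ℝ (Fin m))).finrank_eq]
      simp [add_comm])
    (u := ‖y - x‖⁻¹ • (y - x)) (w := WithLp.toLp 2 (1, 0))
    (by rw [norm_smul, norm_inv, norm_norm, inv_mul_cancel₀ hpos.ne'])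
    (by simp)
  have hf' : f (y - x) = WithLp.toLp 2 (‖y - x‖, 0) := by
    have : y - x = ‖y - x‖ • (‖y - x‖⁻¹ • (y - x)) := by
      rw [smul_smul, mul_inv_cancel₀ hpos.ne', one_smul]
    conv_lhs => rw [this]
    rw [map_smul, hf, ← WithLp.toLp_smul]
    simp
  refine le_trans (le_of_eq ?_) (volume_diff_shift_le m hr.le (norm_nonneg (y - x)))
  have hg : MeasurePreserving (fun z => f (z - x)) volume volume :=
    f.measurePreserving.comp (measurePreserving_sub_right volume x)
  rw [← hg.measure_preimage
    (measurableSet_closedBall.diff measurableSet_closedBall).nullMeasurableSet, ← hf']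
  congr 1
  ext z
  simp only [Set.mem_sdiff, Set.mem_preimage, Metric.mem_closedBall, f.dist_map,
    dist_eq_norm, sub_zero, f.norm_map, sub_sub_sub_cancel_right]

theorem ball_overlap_and_tv_bound
    (n : ℕ) (hn : 1 ≤ n) (r t : ℝ) (hr : 0 < r) (ht : t ∈ Set.Icc (0 : ℝ) 1)
    (x y : EuclideanSpace ℝ (Fin n)) (hxy : ‖y - x‖ ≤ r * t / Real.sqrt n) :
    ENNReal.ofReal (1 - t) * volume (Metric.closedBall x r)
        ≤ volume (Metric.closedBall x r ∩ Metric.closedBall y r) ∧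
    ∀ S : Set (EuclideanSpace ℝ (Fin n)), MeasurableSet S →
      ((volume (Metric.closedBall x r))⁻¹ • volume.restrict (Metric.closedBall x r)) S
        ≤ ((volume (Metric.closedBall y r))⁻¹ • volume.restrict (Metric.closedBall y r)) S
          + ENNReal.ofReal t := by
  obtain ⟨m, rfl⟩ : ∃ m, n = m + 1 := ⟨n - 1, by omega⟩
  have hdiff := volume_diff_le m hr x y hxy
  have hV0 : volume (Metric.closedBall x r) ≠ 0 :=
    (Metric.measure_closedBall_pos volume x hr).ne'
  have hVtop : volume (Metric.closedBall x r) ≠ ⊤ := measure_closedBall_lt_top.ne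
  have hVy : volume (Metric.closedBall y r) = volume (Metric.closedBall x r) := by
    rw [Measure.addHaar_closedBall_center volume y, Measure.addHaar_closedBall_center volume x]
  constructor
  · have htop : ENNReal.ofReal t * volume (Metric.closedBall x r) ≠ ⊤ :=
      ENNReal.mul_ne_top ENNReal.ofReal_ne_top hVtop
    refine (ENNReal.add_le_add_iff_right htop).1 ?_
    rw [← add_mul, ← ENNReal.ofReal_add (by linarith [ht.2]) ht.1, sub_add_cancel,
      ENNReal.ofReal_one, one_mul]
    calc _ = volume (Metric.closedBall x r ∩ Metric.closedBall y r)
          + volume (Metric.closedBall x r \ Metric.closedBall y r) :=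
          (measure_inter_add_sdiff _ measurableSet_closedBall).symm
      _ ≤ _ := by gcongr
  · intro S hS
    simp only [Measure.smul_apply, smul_eq_mul, Measure.restrict_apply hS, hVy]
    set V := volume (Metric.closedBall x r)
    calc V⁻¹ * volume (S ∩ Metric.closedBall x r)
        ≤ V⁻¹ * (volume (S ∩ Metric.closedBall y r)
            + volume (Metric.closedBall x r \ Metric.closedBall y r)) := by
          gcongr
          refine (measure_mono ?_).trans (measure_union_le _ _)
          rintro z ⟨hzS, hzx⟩
          by_cases hzy : z ∈ Metric.closedBall y r
          · exact Or.inl ⟨hzS, hzy⟩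
          · exact Or.inr ⟨hzx, hzy⟩
      _ ≤ V⁻¹ * (volume (S ∩ Metric.closedBall y r) + ENNReal.ofReal t * V) := by gcongr
      _ = _ := by
          rw [mul_add, mul_left_comm, ENNReal.inv_mul_cancel hV0 hVtop, mul_one]
end
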